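/- arXiv:1004.4253 — 2 statements merged into one kernel-verified Lean document; each statement's English description precedes it below -/
import Mathlib

section
/- For every element g of the right-angled Artin group A_Γ, the absolute value satisfies h(abs(g)) = |g| = |abs(g)|. Moreover abs is idempotent: if h(g) = |g| then abs(g) = g; in particular abs(abs(g)) = abs(g) for every g. -/
/-- The commutator relators of the right-angled Artin group on the graph `Γ`. -/
def raagRels {V : Type*} (Γ : SimpleGraph V) : Set (FreeGroup V) :=
  {r | ∃ u v : V, Γ.Adj u v ∧
    r = FreeGroup.of u * FreeGroup.of v * (FreeGroup.of u)⁻¹ * (FreeGroup.of v)⁻¹}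

/-- The right-angled Artin group `A_Γ` on the graph `Γ`. -/
abbrev RAAG {V : Type*} (Γ : SimpleGraph V) : Type _ :=
  PresentedGroup (raagRels Γ)

/-- The generator of `A_Γ` corresponding to the vertex `v`. -/
def RAAG.gen {V : Type*} (Γ : SimpleGraph V) (v : V) : RAAG Γ :=
  PresentedGroup.of v

/-- Word length of `g` with respect to a generating set `X`: the least `n` such that
`g` is a product of `n` elements of `X ∪ X⁻¹`. -/
noncomputable def wlen {G : Type*} [Group G] (X : Set G) (g : G) : ℕ :=
  sInf {n | ∃ l : List G, l.length = n ∧ (∀ x ∈ l, x ∈ X ∨ x⁻¹ ∈ X) ∧ l.prod = g}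

/-- Word length in `A_Γ` with respect to the vertex generating set. -/
noncomputable def RAAG.wordLength {V : Type*} (Γ : SimpleGraph V) (g : RAAG Γ) : ℕ :=
  wlen (Set.range (RAAG.gen Γ)) g

/-- The letter `v^e` (with `e = true` for `v` and `e = false` for `v⁻¹`). -/
def RAAG.letter {V : Type*} (Γ : SimpleGraph V) (v : V) (e : Bool) : RAAG Γ :=
  if e then RAAG.gen Γ v else (RAAG.gen Γ v)⁻¹

/-!
The height of the product of a signed word is the length of the word minus twice the number of
its inverse letters. Hence heights never exceed lengths, and they agree on a geodesic word exactly
when all its letters are positive. The positive word read off from a geodesic word of `g` has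
height `|g|` and also `|g|` letters, so it is again geodesic; and if `h g = |g|`, then every
geodesic word of `g` is already positive.
-/

/-- A word in the letters `i` and `i⁻¹` for `i : ι`. As for `FreeGroup`, the sign `true` marks a
positive letter and `false` an inverse one; words need not be reduced. -/
abbrev SignedWord (ι : Type*) : Type _ := List (ι × Bool)

namespace SignedWord

variable {ι G : Type*} [Group G] (s : ι → G)

/-- The group element `s i` or `(s i)⁻¹` spelled by a single signed letter. -/
def letter (p : ι × Bool) : G := if p.2 then s p.1 else (s p.1)⁻¹

/-- The group element spelled by a signed word when `i` stands for `s i`. -/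
def eval (w : SignedWord ι) : G := (w.map (letter s)).prod

/-- The group element spelled by the positive word obtained by forgetting all signs. -/
def absEval (w : SignedWord ι) : G := (w.map fun p => s p.1).prod

/-- A word is geodesic if no shorter word spells the same group element. -/
def IsGeodesic (w : SignedWord ι) : Prop := w.length = wlen (Set.range s) (w.eval s)

theorem mem_range_letter_iff {x : G} :
    x ∈ Set.range (letter s) ↔ x ∈ Set.range s ∨ x⁻¹ ∈ Set.range s := by
  constructor
  · rintro ⟨⟨i, _ | _⟩, rfl⟩
    · exact .inr ⟨i, (inv_inv _).symm⟩
    · exact .inl ⟨i, rfl⟩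
  · rintro (⟨i, rfl⟩ | ⟨i, hi⟩)
    · exact ⟨(i, true), rfl⟩
    · exact ⟨(i, false), inv_eq_iff_eq_inv.2 hi⟩

theorem exists_map_letter_eq_iff {l : List G} :
    (∃ w : SignedWord ι, w.map (letter s) = l) ↔
      ∀ x ∈ l, x ∈ Set.range s ∨ x⁻¹ ∈ Set.range s := by
  simp only [← mem_range_letter_iff]
  exact Set.ext_iff.1 (Set.range_list_map (letter s)) l

theorem wlen_eval_le_length (w : SignedWord ι) : wlen (Set.range s) (w.eval s) ≤ w.length :=
  Nat.sInf_le ⟨_, List.length_map _, (exists_map_letter_eq_iff s).1 ⟨w, rfl⟩, rfl⟩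

theorem exists_isGeodesic_eval_eq {s : ι → G} (hs : Subgroup.closure (Set.range s) = ⊤) (g : G) :
    ∃ w : SignedWord ι, w.IsGeodesic s ∧ w.eval s = g := by
  have hg : g ∈ Submonoid.closure (Set.range s ∪ (Set.range s)⁻¹) := by
    rw [← Subgroup.closure_toSubmonoid, hs]
    exact Subgroup.mem_top g
  obtain ⟨l, hl, hlg⟩ := Submonoid.exists_list_of_mem_closure hg
  obtain ⟨m, hm_length, hm, hmg⟩ : wlen (Set.range s) g ∈ _ := Nat.sInf_mem ⟨_, l, rfl, hl, hlg⟩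
  obtain ⟨w, rfl⟩ := (exists_map_letter_eq_iff s).2 hm
  have hw : w.eval s = g := hmg
  exact ⟨w, by rw [IsGeodesic, hw, ← hm_length, List.length_map], hw⟩

theorem eval_map_true (w : SignedWord ι) :
    eval s (w.map fun p => (p.1, true)) = w.absEval s := by
  simp [eval, absEval, letter, Function.comp_def]

theorem eval_eq_absEval {w : SignedWord ι} (hw : ∀ p ∈ w, p.2 = true) :
    w.eval s = w.absEval s :=
  congrArg List.prod <| List.map_congr_left fun p hp => if_pos (hw p hp)

theorem wlen_absEval_le_length (w : SignedWord ι) :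
    wlen (Set.range s) (w.absEval s) ≤ w.length := by
  simpa only [eval_map_true, List.length_map] using
    wlen_eval_le_length s (w.map fun p => (p.1, true))

section Height

variable {s} {h : G →* Multiplicative ℤ} (hh : ∀ i, h (s i) = Multiplicative.ofAdd 1)

include hh

theorem height_letter (p : ι × Bool) : (h (letter s p)).toAdd = if p.2 then 1 else -1 := by
  obtain ⟨i, _ | _⟩ := p <;> simp [letter, hh]

theorem height_eval (w : SignedWord ι) :
    (h (w.eval s)).toAdd = w.length - 2 * w.countP fun p => !p.2 := by
  induction w with
  | nil => simp [eval]
  | cons p w ih =>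
    have h_cons : (h (eval s (p :: w))).toAdd = (h (letter s p)).toAdd + (h (eval s w)).toAdd := by
      simp [eval]
    rw [h_cons, ih, height_letter hh, List.length_cons, List.countP_cons]
    grind

theorem height_absEval (w : SignedWord ι) : (h (w.absEval s)).toAdd = w.length := by
  simpa [eval_map_true, List.countP_map, Function.comp_def] using
    height_eval hh (w.map fun p => (p.1, true))

theorem eval_eq_absEval_of_height_eq_length {w : SignedWord ι}
    (hw : (h (w.eval s)).toAdd = w.length) : w.eval s = w.absEval s := by
  have no_inverse_letter : w.countP (fun p => !p.2) = 0 := by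
    have := height_eval hh w
    lia
  exact eval_eq_absEval s fun p hp => by simpa using List.countP_eq_zero.1 no_inverse_letter p hp

theorem height_le_wlen (hs : Subgroup.closure (Set.range s) = ⊤) (g : G) :
    (h g).toAdd ≤ wlen (Set.range s) g := by
  obtain ⟨w, hw, rfl⟩ := exists_isGeodesic_eval_eq hs g
  rw [← hw, height_eval hh]
  lia

end Height

end SignedWord

/-- `abs` is an absolute value map for the generators `s`: it sends the element spelled by a
geodesic word to the element spelled by that word with all signs forgotten. Quantifying over all
geodesic words makes independence of the choice of word part of the notion. -/
def IsAbsMap {ι G : Type*} [Group G] (s : ι → G) (abs : G → G) : Prop :=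
  ∀ w : SignedWord ι, w.IsGeodesic s → abs (w.eval s) = w.absEval s

namespace IsAbsMap

open SignedWord

variable {ι G : Type*} [Group G] {s : ι → G} {abs : G → G} {h : G →* Multiplicative ℤ}
  (habs : IsAbsMap s abs) (hs : Subgroup.closure (Set.range s) = ⊤)
  (hh : ∀ i, h (s i) = Multiplicative.ofAdd 1)

include habs hs hh

theorem height_apply (g : G) : (h (abs g)).toAdd = wlen (Set.range s) g := by
  obtain ⟨w, hw, rfl⟩ := exists_isGeodesic_eval_eq hs g
  rw [habs w hw, height_absEval hh, hw]

theorem wlen_apply (g : G) : wlen (Set.range s) (abs g) = wlen (Set.range s) g := by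
  apply le_antisymm
  · obtain ⟨w, hw, rfl⟩ := exists_isGeodesic_eval_eq hs g
    rw [habs w hw, ← hw]
    exact wlen_absEval_le_length s w
  · exact_mod_cast (habs.height_apply hs hh g).symm.trans_le (height_le_wlen hh hs (abs g))

theorem apply_eq_self {g : G} (hg : (h g).toAdd = wlen (Set.range s) g) : abs g = g := by
  obtain ⟨w, hw, rfl⟩ := exists_isGeodesic_eval_eq hs g
  rw [habs w hw, eval_eq_absEval_of_height_eq_length hh (hg.trans (congrArg _ hw.symm))]

end IsAbsMap

theorem raag_abs_height_and_idempotent_general {ι G : Type*} [Group G] {s : ι → G}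
    (hs : Subgroup.closure (Set.range s) = ⊤) (h : G →* Multiplicative ℤ)
    (hh : ∀ i, h (s i) = Multiplicative.ofAdd 1) (abs : G → G) (habs : IsAbsMap s abs) :
    (∀ g, (h (abs g)).toAdd = wlen (Set.range s) g ∧
      wlen (Set.range s) (abs g) = wlen (Set.range s) g) ∧
    (∀ g, (h g).toAdd = wlen (Set.range s) g → abs g = g) ∧
    (∀ g, abs (abs g) = abs g) := by
  have height (g : G) := habs.height_apply hs hh g
  have wlen_abs (g : G) := habs.wlen_apply hs hh g
  exact ⟨fun g => ⟨height g, wlen_abs g⟩, fun _ => habs.apply_eq_self hs hh,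
    fun g => habs.apply_eq_self hs hh (by rw [height, wlen_abs])⟩

theorem raag_abs_height_and_idempotent {V : Type*} [Fintype V] (Γ : SimpleGraph V)
    (h : RAAG Γ →* Multiplicative ℤ)
    (hh : ∀ v : V, h (RAAG.gen Γ v) = Multiplicative.ofAdd (1 : ℤ))
    (abs : RAAG Γ → RAAG Γ)
    (habs : ∀ (g : RAAG Γ) (w : List (V × Bool)),
      (w.map fun p => RAAG.letter Γ p.1 p.2).prod = g →
      w.length = RAAG.wordLength Γ g →
      abs g = (w.map fun p => RAAG.gen Γ p.1).prod) :
    (∀ g : RAAG Γ,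
      Multiplicative.toAdd (h (abs g)) = (RAAG.wordLength Γ g : ℤ) ∧
      RAAG.wordLength Γ (abs g) = RAAG.wordLength Γ g) ∧
    (∀ g : RAAG Γ,
      Multiplicative.toAdd (h g) = (RAAG.wordLength Γ g : ℤ) → abs g = g) ∧
    (∀ g : RAAG Γ, abs (abs g) = abs g) :=
  raag_abs_height_and_idempotent_general (s := RAAG.gen Γ)
    (PresentedGroup.closure_range_of (raagRels Γ)) h hh abs fun w hw => habs _ w rfl hw
end

section
/- For any two subsets S, T ⊆ V of the vertex set of Γ, the subgroups of the right-angled Artin group A_Γ generated by S and by T intersect in the subgroup generated by S ∩ T: ⟨S⟩ ∩ ⟨T⟩ = ⟨S ∩ T⟩. In particular, if S and T are disjoint then ⟨S⟩ ∩ ⟨T⟩ = {1}. -/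
/-! The endomorphism of `A_Γ` that fixes the generators in `S` and kills all the others restricts to
the identity on `⟨S⟩` and maps `⟨T⟩` into `⟨S ∩ T⟩`, so an element of `⟨S⟩ ∩ ⟨T⟩`, being equal to
its own image, lies in `⟨S ∩ T⟩`. -/

theorem closure_inf_closure_le_of_fixed_of_mapsTo {G : Type*} [Group G] {A B : Set G}
    {K : Subgroup G} (f : G →* G) (fixed : ∀ a ∈ A, f a = a) (mapsTo : Set.MapsTo f B K) :
    Subgroup.closure A ⊓ Subgroup.closure B ≤ K := by
  rintro g ⟨hgA, hgB⟩
  have apply_eq : f g = g := MonoidHom.eqOn_closure (g := MonoidHom.id G) fixed hgA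
  have apply_mem : f g ∈ K := (Subgroup.closure_le (K.comap f)).2 mapsTo hgB
  rwa [apply_eq] at apply_mem

namespace RAAG

variable {V : Type*} {Γ : SimpleGraph V}

theorem commute_gen_of_adj {u v : V} (huv : Γ.Adj u v) : Commute (gen Γ u) (gen Γ v) :=
  commutatorElement_eq_one_iff_commute.1 <|
    PresentedGroup.one_of_mem (rels := raagRels Γ) ⟨u, v, huv, rfl⟩

section lift

variable {G : Type*} [Group G] {φ : V → G}

theorem freeGroupLift_eq_one_of_mem_raagRels
    (hφ : ∀ ⦃u v⦄, Γ.Adj u v → Commute (φ u) (φ v)) {r : FreeGroup V} (hr : r ∈ raagRels Γ) :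
    FreeGroup.lift φ r = 1 := by
  obtain ⟨u, v, huv, rfl⟩ := hr
  simpa only [map_mul, map_inv, FreeGroup.lift_apply_of, commutatorElement_def] using
    commutatorElement_eq_one_iff_commute.2 (hφ huv)

/-- The universal property of `A_Γ`: a map from the vertices to a group sending adjacent vertices to
commuting elements extends to a homomorphism on `A_Γ`. -/
def lift (φ : V → G) (hφ : ∀ ⦃u v⦄, Γ.Adj u v → Commute (φ u) (φ v)) : RAAG Γ →* G :=
  PresentedGroup.toGroup fun _ ↦ freeGroupLift_eq_one_of_mem_raagRels hφ

theorem lift_gen (hφ : ∀ ⦃u v⦄, Γ.Adj u v → Commute (φ u) (φ v)) (v : V) :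
    lift φ hφ (gen Γ v) = φ v :=
  PresentedGroup.toGroup.of _

end lift

theorem commute_mulIndicator_gen_of_adj (S : Set V) ⦃u v : V⦄ (huv : Γ.Adj u v) :
    Commute (S.mulIndicator (gen Γ) u) (S.mulIndicator (gen Γ) v) := by
  by_cases hu : u ∈ S <;> by_cases hv : v ∈ S <;> simp [hu, hv, commute_gen_of_adj huv]

/-- The retraction of `A_Γ` onto the special subgroup `⟨S⟩`, encoded as the endomorphism of `A_Γ`
that fixes the generators in `S` and sends all the others to `1`. -/
noncomputable def retraction (Γ : SimpleGraph V) (S : Set V) : RAAG Γ →* RAAG Γ :=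
  lift (S.mulIndicator (gen Γ)) (commute_mulIndicator_gen_of_adj S)

theorem retraction_gen (S : Set V) (v : V) :
    retraction Γ S (gen Γ v) = S.mulIndicator (gen Γ) v :=
  lift_gen _ v

theorem retraction_gen_of_mem {S : Set V} {v : V} (hv : v ∈ S) :
    retraction Γ S (gen Γ v) = gen Γ v := by
  rw [retraction_gen, Set.mulIndicator_of_mem hv]

theorem retraction_gen_of_notMem {S : Set V} {v : V} (hv : v ∉ S) :
    retraction Γ S (gen Γ v) = 1 := by
  rw [retraction_gen, Set.mulIndicator_of_notMem hv]

theorem mapsTo_retraction_gen_image (S T : Set V) :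
    Set.MapsTo (retraction Γ S) (gen Γ '' T) (Subgroup.closure (gen Γ '' (S ∩ T))) := by
  rintro _ ⟨v, hvT, rfl⟩
  by_cases hvS : v ∈ S
  · rw [retraction_gen_of_mem hvS]
    exact Subgroup.subset_closure (Set.mem_image_of_mem _ ⟨hvS, hvT⟩)
  · rw [retraction_gen_of_notMem hvS]
    exact one_mem _

theorem closure_gen_image_inf (S T : Set V) :
    Subgroup.closure (gen Γ '' S) ⊓ Subgroup.closure (gen Γ '' T) =
      Subgroup.closure (gen Γ '' (S ∩ T)) := by
  apply le_antisymm
  · exact closure_inf_closure_le_of_fixed_of_mapsTo (retraction Γ S)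
      (Set.forall_mem_image.2 fun _ ↦ retraction_gen_of_mem) (mapsTo_retraction_gen_image S T)
  · exact le_inf (Subgroup.closure_mono (Set.image_mono Set.inter_subset_left))
      (Subgroup.closure_mono (Set.image_mono Set.inter_subset_right))

end RAAG

theorem raag_special_subgroup_intersection_general {V : Type*}
    (Γ : SimpleGraph V) (S T : Set V) :
    Subgroup.closure (RAAG.gen Γ '' S) ⊓ Subgroup.closure (RAAG.gen Γ '' T)
      = Subgroup.closure (RAAG.gen Γ '' (S ∩ T)) ∧
    (Disjoint S T →
      Subgroup.closure (RAAG.gen Γ '' S) ⊓ Subgroup.closure (RAAG.gen Γ '' T) = ⊥) := by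
  refine ⟨RAAG.closure_gen_image_inf S T, fun hST ↦ ?_⟩
  rw [RAAG.closure_gen_image_inf, hST.inter_eq, Set.image_empty, Subgroup.closure_empty]

theorem raag_special_subgroup_intersection {V : Type*} [Fintype V]
    (Γ : SimpleGraph V) (S T : Set V) :
    Subgroup.closure (RAAG.gen Γ '' S) ⊓ Subgroup.closure (RAAG.gen Γ '' T)
      = Subgroup.closure (RAAG.gen Γ '' (S ∩ T)) ∧
    (Disjoint S T →
      Subgroup.closure (RAAG.gen Γ '' S) ⊓ Subgroup.closure (RAAG.gen Γ '' T) = ⊥) := by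
  exact raag_special_subgroup_intersection_general Γ S T
end
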